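/- Let I_n be the Gaussian rule for weight w with nodes τ_1 < ... < τ_n and let A_{n+1} be the anti-Gaussian rule given by the eigendecomposition of the matrix J̃_{n+1} obtained from the Jacobi matrix J_n by appending the row/column (√(2β_n), α_n). Then A_{n+1} has positive weights and its n+1 real nodes τ̃_1 < ... < τ̃_{n+1} interlace the Gaussian nodes: τ̃_1 < τ_1 < τ̃_2 < ... < τ_n < τ̃_{n+1}. -/

import Mathlib

open Polynomial Matrix Finset

/-!
Write `p k` for the characteristic polynomial of the `k`-th leading section of an infinite Jacobi
matrix with nonzero off-diagonal entries `c k`. The recurrence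
`p (k + 2) = (X - a (k + 1)) * p (k + 1) - c k ^ 2 * p k` turns the Wronskian
`W k = p k * (p (k + 1))' - (p k)' * p (k + 1)` into `W (k + 1) = p (k + 1) ^ 2 + c k ^ 2 * W k`,
so `W k` is positive on the whole real line. At a root of `p n` this says that `(p n)'` and
`p (n + 1)` have opposite signs; as `(p n)'` alternates along the roots of `p n`, so does
`p (n + 1)`, and the intermediate value theorem puts a root of `p (n + 1)` into each of the
`n + 1` gaps. An eigenvector with first component zero vanishes, row by row. All of this applies
to the anti-Gaussian matrix `J̃_{n+1}`, a Jacobi matrix whose leading section of order `n` is `J_n`.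
-/

section Polynomials

theorem wronskian_X_sub_C_mul_sub {R : Type*} [CommRing R] (p r : R[X]) (a d : R) :
    wronskian p ((X - C a) * p - C d * r) = p ^ 2 + C d * wronskian r p := by
  simp only [wronskian, derivative_sub, derivative_mul, derivative_X, derivative_C]
  ring

theorem eq_nodal_of_monic_of_natDegree_eq_card {ι R : Type*} [CommRing R] [IsDomain R]
    {s : Finset ι} {v : ι → R} {q : R[X]} (hv : Set.InjOn v s) (hq : q.Monic)
    (hdeg : q.natDegree = #s) (hroot : ∀ i ∈ s, q.eval (v i) = 0) : q = Lagrange.nodal s v := by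
  have hdeg' : q.degree = #s := by rw [degree_eq_natDegree hq.ne_zero, hdeg]
  refine eq_of_degree_sub_lt_of_eval_index_eq s hv ?_ fun i hi => ?_
  · rw [← hdeg']
    exact degree_sub_lt_left (by rw [hdeg', Lagrange.degree_nodal]) hq.ne_zero
      (hq.leadingCoeff.trans Lagrange.nodal_monic.leadingCoeff.symm)
  · rw [hroot i hi, Lagrange.eval_nodal_at_node hi]

theorem neg_one_pow_card_mul_prod_sub_pos {ι R : Type*} [CommRing R] [LinearOrder R]
    [IsStrictOrderedRing R] {s : Finset ι} {v : ι → R} {x : R} (hx : ∀ i ∈ s, x ≠ v i) :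
    0 < (-1) ^ #{i ∈ s | x < v i} * ∏ i ∈ s, (x - v i) := by
  rw [← prod_const, prod_filter, ← prod_mul_distrib]
  refine prod_pos fun i hi => ?_
  rcases (hx i hi).lt_or_gt with hlt | hgt
  · simp [hlt]
  · simpa [hgt.not_gt] using hgt

theorem neg_one_pow_mul_eval_derivative_nodal_pos {R : Type*} [CommRing R] [LinearOrder R]
    [IsStrictOrderedRing R] {n : ℕ} {τ : Fin n → R} (hτ : StrictMono τ) (i : Fin n) :
    0 < (-1) ^ (n + 1 + (i : ℕ)) * (derivative (Lagrange.nodal univ τ)).eval (τ i) := by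
  have hcard : #{j ∈ univ.erase i | τ i < τ j} = n - 1 - i := by
    rw [← Fin.card_Ioi]
    congr 1
    ext j
    simp +contextual [hτ.lt_iff_lt, ne_of_gt]
  have hparity : n + 1 + (i : ℕ) = n - 1 - i + 2 * (i + 1) := by omega
  rw [Lagrange.eval_nodal_derivative_eval_node_eq (mem_univ i), Lagrange.eval_nodal, hparity,
    pow_add, Even.neg_one_pow (even_two_mul _), mul_one, ← hcard]
  exact neg_one_pow_card_mul_prod_sub_pos fun j hj => hτ.injective.ne (ne_of_mem_erase hj).symm

theorem injective_of_eval_derivative_nodal_ne_zero {ι R : Type*} [Fintype ι] [CommRing R]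
    {v : ι → R} (h : ∀ i, (derivative (Lagrange.nodal univ v)).eval (v i) ≠ 0) :
    Function.Injective v := by
  classical
  intro i j hij
  by_contra hne
  apply h i
  rw [Lagrange.eval_nodal_derivative_eval_node_eq (mem_univ i), hij]
  exact Lagrange.eval_nodal_at_node (mem_erase.2 ⟨Ne.symm hne, mem_univ j⟩)

theorem eventually_atTop_eval_pos {q : ℝ[X]} (hq : q.Monic) (hdeg : 0 < q.natDegree) :
    ∀ᶠ x in Filter.atTop, 0 < q.eval x :=
  (q.tendsto_atTop_of_leadingCoeff_nonneg (natDegree_pos_iff_degree_pos.1 hdeg)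
    (hq.leadingCoeff ▸ zero_le_one)).eventually_gt_atTop 0

theorem eventually_atBot_neg_one_pow_mul_eval_pos {q : ℝ[X]} (hq : q.Monic)
    (hdeg : 0 < q.natDegree) :
    ∀ᶠ x in Filter.atBot, 0 < (-1) ^ q.natDegree * q.eval x := by
  have hdeg' : 0 < ((-1) ^ q.natDegree * q.comp (-X)).natDegree := by
    rw [← C_1, ← C_neg, ← C_pow, natDegree_C_mul (by simp), natDegree_comp]
    simpa using hdeg
  filter_upwards [Filter.tendsto_neg_atBot_atTop.eventually
    (eventually_atTop_eval_pos hq.neg_one_pow_natDegree_mul_comp_neg_X hdeg')] with x hx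
  simpa using hx

end Polynomials

section IntermediateValue

variable {α : Type*} [ConditionallyCompleteLinearOrder α] [TopologicalSpace α] [OrderTopology α]
  [DenselyOrdered α]

theorem exists_mem_Ioo_eq_zero {f : α → ℝ} {a b : α} (hab : a ≤ b)
    (hf : ContinuousOn f (Set.Icc a b)) (hsign : f a * f b < 0) : ∃ x ∈ Set.Ioo a b, f x = 0 := by
  rcases mul_neg_iff.1 hsign with ⟨ha, hb⟩ | ⟨ha, hb⟩
  · exact intermediate_value_Ioo' hab hf ⟨hb, ha⟩
  · exact intermediate_value_Ioo hab hf ⟨ha, hb⟩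

theorem exists_strictMono_roots_of_alternating {m : ℕ} {f : α → ℝ} (hf : Continuous f)
    {e : Fin (m + 1) → α} (he : Monotone e)
    (hsign : ∀ k : Fin (m + 1), 0 < (-1) ^ (m + (k : ℕ)) * f (e k)) :
    ∃ σ : Fin m → α, StrictMono σ ∧
      ∀ k, σ k ∈ Set.Ioo (e k.castSucc) (e k.succ) ∧ f (σ k) = 0 := by
  have hneg (k : Fin m) : f (e k.castSucc) * f (e k.succ) < 0 := by
    have hpos := mul_pos (hsign k.castSucc) (hsign k.succ)
    rw [mul_mul_mul_comm, ← pow_add, Fin.val_castSucc, Fin.val_succ, Odd.neg_one_pow] at hpos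
    · linarith
    · exact ⟨m + k, by ring⟩
  choose σ hmem hzero using fun k : Fin m =>
    exists_mem_Ioo_eq_zero (he k.castSucc_le_succ) hf.continuousOn (hneg k)
  refine ⟨σ, fun i j hij => ?_, fun k => ⟨hmem k, hzero k⟩⟩
  calc σ i < e i.succ := (hmem i).2
    _ ≤ e j.castSucc := he (Fin.succ_le_castSucc_iff.2 hij)
    _ < σ j := (hmem j).1

end IntermediateValue

section Interlacing

theorem monotone_snoc {α : Type*} [Preorder α] {n : ℕ} {f : Fin n → α} {a : α} (hf : Monotone f)
    (ha : ∀ i, f i ≤ a) : Monotone (Fin.snoc f a : Fin (n + 1) → α) := by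
  intro i j
  induction j using Fin.lastCases with
  | last => induction i using Fin.lastCases <;> simp [ha]
  | cast j =>
    induction i using Fin.lastCases with
    | last => intro h; exact absurd h (Fin.castSucc_lt_last j).not_ge
    | cast i => intro h; simpa using hf (Fin.castSucc_le_castSucc_iff.1 h)

theorem exists_interlacing_of_alternating {n : ℕ} {q : ℝ[X]} (hq : q.Monic)
    (hdeg : q.natDegree = n + 1) {τ : Fin n → ℝ} (hτ : Monotone τ)
    (hsign : ∀ i : Fin n, 0 < (-1) ^ (n + (i : ℕ)) * q.eval (τ i)) :
    ∃ σ : Fin (n + 1) → ℝ, StrictMono σ ∧ q = Lagrange.nodal univ σ ∧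
      ∀ i : Fin n, σ i.castSucc < τ i ∧ τ i < σ i.succ := by
  obtain ⟨U, hU, hτU⟩ := ((eventually_atTop_eval_pos hq (by omega)).and
    (Filter.eventually_all.2 fun i => Filter.eventually_ge_atTop (τ i))).exists
  obtain ⟨L, hL, hLU, hLτ⟩ := ((eventually_atBot_neg_one_pow_mul_eval_pos hq (by omega)).and
    ((Filter.eventually_le_atBot U).and
      (Filter.eventually_all.2 fun i => Filter.eventually_le_atBot (τ i)))).exists
  let e : Fin (n + 2) → ℝ := Fin.cons L (Fin.snoc τ U)
  have he : Monotone e := by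
    refine monotone_vecCons.2 ⟨?_, monotone_snoc hτ hτU⟩
    induction (0 : Fin (n + 1)) using Fin.lastCases <;> simp [hLU, hLτ]
  have hsign_e (k : Fin (n + 2)) : 0 < (-1) ^ (n + 1 + (k : ℕ)) * q.eval (e k) := by
    induction k using Fin.cases with
    | zero => simpa [e, hdeg] using hL
    | succ k =>
      have hparity : n + 1 + (k.succ : ℕ) = n + k + 2 := by rw [Fin.val_succ]; ring
      rw [hparity, pow_add, neg_one_sq, mul_one]
      induction k using Fin.lastCases with
      | last => simpa [e, ← two_mul] using hU
      | cast i => simpa [e] using hsign i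
  obtain ⟨σ, hσ, hroot⟩ := exists_strictMono_roots_of_alternating q.continuous he hsign_e
  refine ⟨σ, hσ, ?_, fun i => ⟨?_, ?_⟩⟩
  · exact eq_nodal_of_monic_of_natDegree_eq_card hσ.injective.injOn hq (by simpa using hdeg)
      fun k _ => (hroot k).2
  · simpa [e] using (hroot i.castSucc).1.2
  · simpa [e] using (hroot i.succ).1.1

theorem exists_interlacing_of_wronskian_pos {n : ℕ} {q : ℝ[X]} (hq : q.Monic)
    (hdeg : q.natDegree = n + 1) {τ : Fin n → ℝ} (hτ : Monotone τ)
    (hW : ∀ i, 0 < (wronskian (Lagrange.nodal univ τ) q).eval (τ i)) :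
    ∃ σ : Fin (n + 1) → ℝ, StrictMono σ ∧ q = Lagrange.nodal univ σ ∧
      ∀ i : Fin n, σ i.castSucc < τ i ∧ τ i < σ i.succ := by
  have hopposite (i : Fin n) :
      (derivative (Lagrange.nodal univ τ)).eval (τ i) * q.eval (τ i) < 0 := by
    simpa [wronskian, Lagrange.eval_nodal_at_node] using hW i
  have hτ' : StrictMono τ := hτ.strictMono_of_injective <|
    injective_of_eval_derivative_nodal_ne_zero fun i => left_ne_zero_of_mul (hopposite i).ne
  refine exists_interlacing_of_alternating hq hdeg hτ fun i => ?_
  have hpos := neg_one_pow_mul_eval_derivative_nodal_pos hτ' i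
  refine (mul_pos_iff_of_pos_left hpos).1 ?_
  rw [mul_mul_mul_comm, ← pow_add, Odd.neg_one_pow ⟨n + i, by ring⟩]
  linarith [hopposite i]

end Interlacing

section Determinant

variable {R : Type*} [CommRing R]

theorem det_eq_mul_of_last_column {n : ℕ} (A : Matrix (Fin (n + 1)) (Fin (n + 1)) R)
    (h : ∀ i : Fin n, A i.castSucc (Fin.last n) = 0) :
    A.det = A (Fin.last n) (Fin.last n) * (A.submatrix Fin.castSucc Fin.castSucc).det := by
  rw [det_succ_column A (Fin.last n), Fin.sum_univ_castSucc, sum_eq_zero fun i _ => by simp [h i]]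
  simp [← two_mul, Fin.succAbove_last]

theorem det_eq_sub_of_last_row_of_last_column {n : ℕ} (A : Matrix (Fin (n + 2)) (Fin (n + 2)) R)
    (hrow : ∀ j : Fin n, A (Fin.last _) j.castSucc.castSucc = 0)
    (hcol : ∀ i : Fin n, A i.castSucc.castSucc (Fin.last _) = 0) :
    A.det = A (Fin.last _) (Fin.last _) * (A.submatrix Fin.castSucc Fin.castSucc).det -
      A (Fin.last _) (Fin.last n).castSucc * A (Fin.last n).castSucc (Fin.last _) *
        ((A.submatrix Fin.castSucc Fin.castSucc).submatrix Fin.castSucc Fin.castSucc).det := by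
  have hskip (j : Fin n) : (Fin.last n).castSucc.succAbove j.castSucc = j.castSucc.castSucc :=
    Fin.succAbove_of_castSucc_lt _ _ (by simp [Fin.lt_def])
  have hskip_last : (Fin.last n).castSucc.succAbove (Fin.last n) = Fin.last (n + 1) := by
    rw [Fin.succAbove_castSucc_self, Fin.succ_last]
  have hminor : (A.submatrix Fin.castSucc (Fin.last n).castSucc.succAbove).det =
      A (Fin.last n).castSucc (Fin.last _) *
        ((A.submatrix Fin.castSucc Fin.castSucc).submatrix Fin.castSucc Fin.castSucc).det := by
    rw [det_eq_mul_of_last_column _ fun i => by simp [hskip_last, hcol]]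
    congr 2
    · simp [hskip_last]
    · ext i j
      simp [hskip]
  rw [det_succ_row A (Fin.last _), Fin.sum_univ_castSucc, Fin.sum_univ_castSucc,
    sum_eq_zero fun j _ => by simp [hrow j], Fin.succAbove_last, hminor]
  simp only [Fin.val_last, Fin.val_castSucc]
  rw [Odd.neg_one_pow ⟨n, by ring⟩, Even.neg_one_pow ⟨n + 1, rfl⟩]
  ring

end Determinant

section Jacobi

/-- The `n`-th leading section of the infinite symmetric tridiagonal (Jacobi) matrix with diagonal
`a 0, a 1, …` and off-diagonal `c 0, c 1, …`. The entry `c k` couples the indices `k` and `k + 1`,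
so the Jacobi matrix of a weight has `a k = α_k` and `c k = √β_{k+1}`. -/
def jacobiMatrix {R : Type*} [Zero R] (a c : ℕ → R) (n : ℕ) : Matrix (Fin n) (Fin n) R :=
  Matrix.of fun i j =>
    if (i : ℕ) = j then a i
    else if (i : ℕ) + 1 = j then c i
    else if (j : ℕ) + 1 = i then c j
    else 0

theorem jacobiMatrix_apply_eq_zero {R : Type*} [Zero R] (a c : ℕ → R) {n : ℕ} {i j : Fin n}
    (h : (i : ℕ) + 1 < j ∨ (j : ℕ) + 1 < i) : jacobiMatrix a c n i j = 0 := by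
  simp only [jacobiMatrix, of_apply]
  rw [if_neg (by omega), if_neg (by omega), if_neg (by omega)]

variable {R : Type*} [CommRing R] (a c : ℕ → R)

theorem charmatrix_jacobiMatrix_submatrix_castSucc (n : ℕ) :
    (jacobiMatrix a c (n + 1)).charmatrix.submatrix Fin.castSucc Fin.castSucc =
      (jacobiMatrix a c n).charmatrix := by
  ext1 i j
  simp [charmatrix_apply, jacobiMatrix, diagonal_apply]

theorem charpoly_jacobiMatrix_add_two (n : ℕ) :
    (jacobiMatrix a c (n + 2)).charpoly =
      (X - C (a (n + 1))) * (jacobiMatrix a c (n + 1)).charpoly -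
        C (c n ^ 2) * (jacobiMatrix a c n).charpoly := by
  have hzero {i j : Fin (n + 2)} (h : (i : ℕ) + 1 < j ∨ (j : ℕ) + 1 < i) :
      (jacobiMatrix a c (n + 2)).charmatrix i j = 0 := by
    rw [charmatrix_apply_ne _ _ _ (by grind), jacobiMatrix_apply_eq_zero a c h, C_0, neg_zero]
  have hdiag : (jacobiMatrix a c (n + 2)).charmatrix (Fin.last _) (Fin.last _) =
      X - C (a (n + 1)) := by
    simp [charmatrix_apply_eq, jacobiMatrix]
  have hlower : (jacobiMatrix a c (n + 2)).charmatrix (Fin.last _) (Fin.last n).castSucc =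
      -C (c n) := by
    simp [charmatrix_apply_ne, jacobiMatrix, Fin.ext_iff, show n + 1 + 1 ≠ n by omega]
  have hupper : (jacobiMatrix a c (n + 2)).charmatrix (Fin.last n).castSucc (Fin.last _) =
      -C (c n) := by
    simp [charmatrix_apply_ne, jacobiMatrix, Fin.ext_iff]
  simp only [charpoly]
  rw [det_eq_sub_of_last_row_of_last_column _ (fun j => hzero (by simp))
      (fun i => hzero (by simp)), charmatrix_jacobiMatrix_submatrix_castSucc,
    charmatrix_jacobiMatrix_submatrix_castSucc, hdiag, hlower, hupper, neg_mul_neg, C_pow, sq]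

theorem eval_wronskian_charpoly_jacobiMatrix_pos [LinearOrder R] [IsStrictOrderedRing R] {n : ℕ}
    (hc : ∀ k < n, c k ≠ 0) (x : R) :
    0 < (wronskian (jacobiMatrix a c n).charpoly (jacobiMatrix a c (n + 1)).charpoly).eval x := by
  induction n with
  | zero => simp [wronskian, charpoly, jacobiMatrix]
  | succ n ih =>
    have hW := ih fun k hk => hc k (hk.trans n.lt_succ_self)
    have hcn : 0 < c n ^ 2 := sq_pos_of_ne_zero (hc n n.lt_succ_self)
    rw [charpoly_jacobiMatrix_add_two, wronskian_X_sub_C_mul_sub]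
    simp only [eval_add, eval_mul, eval_pow, eval_C]
    positivity

theorem apply_zero_ne_zero_of_jacobiMatrix_mulVec [NoZeroDivisors R] {n : ℕ}
    (hc : ∀ k < n, c k ≠ 0) {v : Fin (n + 1) → R} {μ : R} (hv : v ≠ 0)
    (hμ : jacobiMatrix a c (n + 1) *ᵥ v = μ • v) : v 0 ≠ 0 := by
  intro h0
  suffices hzero : ∀ k, ∀ hk : k < n + 1, v ⟨k, hk⟩ = 0 from hv (funext fun i => hzero i i.2)
  intro k
  induction k using Nat.strong_induction_on with
  | _ k ih =>
    intro hk
    rcases k with _ | k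
    · exact h0
    · have hrow : ∑ j, jacobiMatrix a c (n + 1) ⟨k, by omega⟩ j * v j = 0 := by
        simpa [mulVec, dotProduct, ih k k.lt_succ_self (by omega)] using congrFun hμ ⟨k, by omega⟩
      rw [Fintype.sum_eq_single ⟨k + 1, hk⟩] at hrow
      · have hprod : c k * v ⟨k + 1, hk⟩ = 0 := by simpa [jacobiMatrix] using hrow
        exact (mul_eq_zero.1 hprod).resolve_left (hc k (by omega))
      · intro j hj
        rcases lt_or_gt_of_ne (Fin.val_ne_of_ne hj) with hlt | hgt
        · rw [ih j hlt j.2, mul_zero]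
        · rw [jacobiMatrix_apply_eq_zero a c (Or.inl hgt), zero_mul]

end Jacobi

theorem anti_gaussian_interlacing_and_positive_weights_general {n : ℕ} {a c : ℕ → ℝ}
    (hc : ∀ k < n, c k ≠ 0) {b₀ : ℝ} (hb₀ : 0 < b₀) {τ : Fin n → ℝ} (hτ : Monotone τ)
    (hchar : (jacobiMatrix a c n).charpoly = ∏ i, (X - C (τ i))) :
    ∃ τt : Fin (n + 1) → ℝ, StrictMono τt ∧
      (jacobiMatrix a c (n + 1)).charpoly = ∏ i, (X - C (τt i)) ∧
      (∀ i : Fin n, τt i.castSucc < τ i ∧ τ i < τt i.succ) ∧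
      (∀ i : Fin (n + 1), ∀ v : Fin (n + 1) → ℝ,
        (∑ j, v j ^ 2 = 1) → (jacobiMatrix a c (n + 1)).mulVec v = τt i • v →
          0 < b₀ * v 0 ^ 2) := by
  obtain ⟨σ, hσ, hcharσ, hinterlace⟩ :=
    exists_interlacing_of_wronskian_pos (charpoly_monic (jacobiMatrix a c (n + 1)))
      (by simp) hτ fun i => by
        rw [Lagrange.nodal_eq, ← hchar]
        exact eval_wronskian_charpoly_jacobiMatrix_pos a c hc (τ i)
  refine ⟨σ, hσ, hcharσ, hinterlace, fun i v hnorm heigen => ?_⟩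
  have hv : v ≠ 0 := by
    rintro rfl
    simp at hnorm
  have hv0 : v 0 ≠ 0 := apply_zero_ne_zero_of_jacobiMatrix_mulVec a c hc hv heigen
  positivity

/-- The anti-Gaussian rule, obtained from the extended Jacobi matrix `J̃_{n+1}`
(with appended row/column `(√(2βₙ), αₙ)`), has `n+1` real nodes which strictly interlace
the Gaussian nodes, and all its weights (`β₀` times the squared first components of
normalized eigenvectors of `J̃_{n+1}`) are positive. -/
theorem anti_gaussian_interlacing_and_positive_weights (n : ℕ) (hn : 1 ≤ n)
    (a : ℕ → ℝ) (b : ℕ → ℝ) (hb : ∀ k, 0 < b k)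
    (b₀ : ℝ) (hb₀ : 0 < b₀)
    (Jn : Matrix (Fin n) (Fin n) ℝ)
    (hJn : ∀ i j : Fin n, Jn i j =
      if (i : ℕ) = (j : ℕ) then a i
      else if (i : ℕ) + 1 = (j : ℕ) then Real.sqrt (b ((i : ℕ) + 1))
      else if (j : ℕ) + 1 = (i : ℕ) then Real.sqrt (b ((j : ℕ) + 1))
      else 0)
    (Jt : Matrix (Fin (n + 1)) (Fin (n + 1)) ℝ)
    (hJt : ∀ i j : Fin (n + 1), Jt i j =
      if (i : ℕ) = (j : ℕ) then a i
      else if (i : ℕ) + 1 = (j : ℕ) then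
        (if (j : ℕ) = n then Real.sqrt (2 * b n) else Real.sqrt (b ((i : ℕ) + 1)))
      else if (j : ℕ) + 1 = (i : ℕ) then
        (if (i : ℕ) = n then Real.sqrt (2 * b n) else Real.sqrt (b ((j : ℕ) + 1)))
      else 0)
    (τ : Fin n → ℝ) (hτ : StrictMono τ)
    (hchar : Jn.charpoly = ∏ i, (X - C (τ i))) :
    ∃ τt : Fin (n + 1) → ℝ, StrictMono τt ∧
      Jt.charpoly = ∏ i, (X - C (τt i)) ∧
      (∀ i : Fin n, τt i.castSucc < τ i ∧ τ i < τt i.succ) ∧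
      (∀ i : Fin (n + 1), ∀ v : Fin (n + 1) → ℝ,
        (∑ j, v j ^ 2 = 1) → Jt.mulVec v = τt i • v → 0 < b₀ * v 0 ^ 2) := by
  let c : ℕ → ℝ := fun k => if k + 1 = n then √(2 * b n) else √(b (k + 1))
  have hc (k : ℕ) : c k ≠ 0 := by
    have hbn := hb n
    have hbk := hb (k + 1)
    simp only [c]
    split_ifs <;> positivity
  obtain rfl : Jn = jacobiMatrix a c n := by
    ext i j
    rw [hJn, jacobiMatrix, of_apply]
    grind
  obtain rfl : Jt = jacobiMatrix a c (n + 1) := by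
    ext i j
    rw [hJt, jacobiMatrix, of_apply]
    grind
  exact anti_gaussian_interlacing_and_positive_weights_general (fun k _ => hc k) hb₀ hτ.monotone
    hchar
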